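/- arXiv:1005.1635 — 15 statements merged into one kernel-verified Lean document; each statement's English description precedes it below -/
import Mathlib

section
/- Let a, P1, P2 be real numbers with a > 0, P2 ≥ 0 and a^2 * P1 ≥ 1. Then C(2*a^2*P1 + 2*P2) ≤ C( (a^2*P1 - 1 + P2) / 4 ) + 3/2. -/
/-- Gaussian capacity function: C(x) = (1/2) * log₂(1 + x). -/
noncomputable def C (x : ℝ) : ℝ := (1/2) * Real.logb 2 (1 + x)

theorem stmt_1 (a P1 P2 : ℝ) (ha : 0 < a) (hP2 : 0 ≤ P2) (hI : 1 ≤ a ^ 2 * P1) :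
    C (2 * a ^ 2 * P1 + 2 * P2) ≤ C ((a ^ 2 * P1 - 1 + P2) / 4) + 3 / 2 := by
  have hlog : Real.logb 2 (8 * (1 + (a ^ 2 * P1 - 1 + P2) / 4)) =
      3 + Real.logb 2 (1 + (a ^ 2 * P1 - 1 + P2) / 4) := by
    rw [Real.logb_mul (by norm_num) (by linarith), show (8 : ℝ) = 2 ^ 3 by norm_num,
      Real.logb_pow, Real.logb_self_eq_one (by norm_num)]
    norm_num
  have hmono : Real.logb 2 (1 + (2 * a ^ 2 * P1 + 2 * P2)) ≤
      Real.logb 2 (8 * (1 + (a ^ 2 * P1 - 1 + P2) / 4)) :=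
    Real.logb_le_logb_of_le (by norm_num) (by linarith) (by linarith)
  unfold C
  linarith
end

section
/- Let a, P1, P2 be real numbers with a > 0, P1 ≥ 0, P2 ≥ 0 and a^2 * P1 ≥ 1. Then C(P1) + C(P2) ≤ C( (min(a^2*P1 - 1, P2) + 2) / (2*a^2) ) + C( max(a^2*P1 - 1, P2) / 4 ) + 3/2. -/
/-- The product inequality behind the gap bound, cleared of denominators. -/
lemma mul_le_min_max_mul {s x y : ℝ} (hs : 0 ≤ s) (hx : 0 ≤ x) (hy : 0 ≤ y) :
    (s + x + 1) * (1 + y) ≤ (2 * s + min x y + 2) * (4 + max x y) := by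
  rcases le_total x y with h | h
  · rw [min_eq_left h, max_eq_right h]
    gcongr <;> linarith
  · rw [min_eq_right h, max_eq_left h]
    nlinarith [mul_le_mul_of_nonneg_left h hs, mul_nonneg hs hx]

theorem stmt_2 (a P1 P2 : ℝ) (ha : 0 < a) (hP1 : 0 ≤ P1) (hP2 : 0 ≤ P2)
    (hI : 1 ≤ a ^ 2 * P1) :
    C P1 + C P2 ≤
      C ((min (a ^ 2 * P1 - 1) P2 + 2) / (2 * a ^ 2)) +
        C (max (a ^ 2 * P1 - 1) P2 / 4) + 3 / 2 := by
  have hs : 0 < a ^ 2 := by positivity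
  have hx : 0 ≤ a ^ 2 * P1 - 1 := by linarith
  have hm : 0 ≤ min (a ^ 2 * P1 - 1) P2 := le_min hx hP2
  have hM : 0 ≤ max (a ^ 2 * P1 - 1) P2 := le_max_of_le_right hP2
  have key := mul_le_min_max_mul hs.le hx hP2
  unfold C
  generalize min (a ^ 2 * P1 - 1) P2 = m at *
  generalize max (a ^ 2 * P1 - 1) P2 = M at *
  have hprod : (1 + P1) * (1 + P2) ≤ (1 + (m + 2) / (2 * a ^ 2)) * (1 + M / 4) * 8 := by
    have h : (1 + (m + 2) / (2 * a ^ 2)) * (1 + M / 4) * 8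
        = (2 * a ^ 2 + m + 2) * (4 + M) / a ^ 2 := by
      field_simp
      ring
    rw [h, le_div_iff₀ hs]
    linarith
  have hlog := Real.logb_le_logb_of_le one_lt_two (by positivity) hprod
  have h8 : Real.logb 2 8 = 3 := by
    rw [show (8 : ℝ) = 2 ^ (3 : ℝ) by norm_num, Real.logb_rpow] <;> norm_num
  rw [Real.logb_mul (by positivity) (by positivity),
    Real.logb_mul (by positivity) (by norm_num),
    Real.logb_mul (by positivity) (by positivity), h8] at hlog
  linarith
end

section
/- Let a, P1, P2 be real numbers with a ≥ 0, P2 ≥ 0 and a^2 * P1 satisfying 0 ≤ a^2 * P1 ≤ 1. Then C(2*a^2*P1 + 2*P2) ≤ C( P2 / (a^2*P1 + 1) ) + 1. -/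
theorem stmt_3 (a P1 P2 : ℝ) (ha : 0 ≤ a) (hP2 : 0 ≤ P2)
    (h0 : 0 ≤ a ^ 2 * P1) (h1 : a ^ 2 * P1 ≤ 1) :
    C (2 * a ^ 2 * P1 + 2 * P2) ≤ C (P2 / (a ^ 2 * P1 + 1)) + 1 := by
  have hle : 1 + (2 * a ^ 2 * P1 + 2 * P2) ≤ 2 ^ 2 * (1 + P2 / (a ^ 2 * P1 + 1)) := by
    have hdiv : P2 / 2 ≤ P2 / (a ^ 2 * P1 + 1) := by
      gcongr
      linarith
    linarith
  have hpos : 0 < 1 + P2 / (a ^ 2 * P1 + 1) := by positivity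
  have hlog := Real.logb_le_logb_of_le one_lt_two (by linarith) hle
  rw [Real.logb_mul (by norm_num) hpos.ne', Real.logb_pow,
    Real.logb_self_eq_one one_lt_two] at hlog
  unfold C
  push_cast at hlog
  linarith
end

section
/- Let a, P1, P2 be real numbers with 0 < a ≤ 1, P2 ≥ 0 and a^2 * P1 ≥ 1. Then C( (1 - a^2)*P1 / (1 + a^2*P1) ) + C(2*a^2*P1 + 2*P2) − [ C(1/a^2) + C( (a^2*P1 − 1 + P2) / 2 ) − 1/2 ] ≤ 3/2. -/
theorem C_le_C {x y : ℝ} (hx : 0 ≤ x) (hxy : x ≤ y) : C x ≤ C y := by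
  unfold C
  have := Real.logb_le_logb_of_le (b := 2) one_lt_two (by linarith : 0 < 1 + x)
    (by linarith : 1 + x ≤ 1 + y)
  linarith

theorem C_le_C_add_one {x y : ℝ} (hx : 0 ≤ x) (hxy : 1 + x ≤ 4 * (1 + y)) :
    C x ≤ C y + 1 := by
  unfold C
  have hle := Real.logb_le_logb_of_le (b := 2) one_lt_two (by linarith : 0 < 1 + x) hxy
  have hfour : Real.logb 2 4 = 2 := by
    rw [show (4 : ℝ) = 2 ^ (2 : ℝ) by norm_num, Real.logb_rpow] <;> norm_num
  rw [Real.logb_mul four_ne_zero (by linarith : 0 < 1 + y).ne', hfour] at hle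
  linarith

theorem stmt_5 (a P1 P2 : ℝ) (ha0 : 0 < a) (ha1 : a ≤ 1) (hP2 : 0 ≤ P2)
    (hI : 1 ≤ a ^ 2 * P1) :
    C ((1 - a ^ 2) * P1 / (1 + a ^ 2 * P1)) + C (2 * a ^ 2 * P1 + 2 * P2) -
      (C (1 / a ^ 2) + C ((a ^ 2 * P1 - 1 + P2) / 2) - 1 / 2) ≤ 3 / 2 := by
  have ha2 : 0 < a ^ 2 := by positivity
  have ha2_le : a ^ 2 ≤ 1 := pow_le_one₀ ha0.le ha1
  have hP1 : 0 < P1 := pos_of_mul_pos_right (by linarith : 0 < a ^ 2 * P1) ha2.le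
  have hprivate : C ((1 - a ^ 2) * P1 / (1 + a ^ 2 * P1)) ≤ C (1 / a ^ 2) := by
    apply C_le_C
    · exact div_nonneg (mul_nonneg (by linarith) hP1.le) (by linarith)
    · rw [div_le_div_iff₀ (by linarith) ha2]
      nlinarith [mul_pos (mul_pos ha2 ha2) hP1]
  have hcommon : C (2 * a ^ 2 * P1 + 2 * P2) ≤ C ((a ^ 2 * P1 - 1 + P2) / 2) + 1 :=
    C_le_C_add_one (by linarith) (by linarith)
  linarith
end

section
/- Let a, P1, P2 be real numbers with P1 ≥ 0, P2 ≥ 0, a ≥ 0 and a^2 ≤ P2 + 1. Then C(P1) + C(P2) ≥ C(P2 + a^2 * P1). -/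
theorem stmt_6 (a P1 P2 : ℝ) (hP1 : 0 ≤ P1) (hP2 : 0 ≤ P2) (ha : 0 ≤ a)
    (h : a ^ 2 ≤ P2 + 1) :
    C (P2 + a ^ 2 * P1) ≤ C P1 + C P2 := by
  have hmul : 1 + (P2 + a ^ 2 * P1) ≤ (1 + P1) * (1 + P2) := by
    linarith [mul_le_mul_of_nonneg_right h hP1]
  have hlog : Real.logb 2 (1 + (P2 + a ^ 2 * P1)) ≤
      Real.logb 2 (1 + P1) + Real.logb 2 (1 + P2) := by
    rw [← Real.logb_mul (by positivity) (by positivity)]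
    exact Real.logb_le_logb_of_le one_lt_two (by positivity) hmul
  unfold C
  linarith
end

section
/- Let a, P1p, P2p, s be real numbers with 0 ≤ a ≤ 1, P1p ≥ 0, P2p ≥ 0, s ≥ 0, and set d := 1 + a^2 * P1p. Then C(P2p / d) + C(s) ≥ C( (P2p + a^2 * s) / d ). -/
theorem stmt_7 (a P1p P2p s d : ℝ) (ha0 : 0 ≤ a) (ha1 : a ≤ 1)
    (hP1p : 0 ≤ P1p) (hP2p : 0 ≤ P2p) (hs : 0 ≤ s)
    (hd : d = 1 + a ^ 2 * P1p) :
    C ((P2p + a ^ 2 * s) / d) ≤ C (P2p / d) + C s := by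
  have hd1 : 1 ≤ d := by rw [hd]; nlinarith [mul_nonneg (sq_nonneg a) hP1p]
  have hd0 : 0 < d := by linarith
  have hx : 0 ≤ P2p / d := by positivity
  have hs_le : a ^ 2 * s / d ≤ s := by
    rw [div_le_iff₀ hd0]
    nlinarith [pow_le_one₀ ha0 ha1 (n := 2)]
  have key : 1 + (P2p + a ^ 2 * s) / d ≤ (1 + P2p / d) * (1 + s) := by
    rw [add_div]
    nlinarith [mul_nonneg hx hs]
  unfold C
  rw [← mul_add, ← Real.logb_mul (by positivity) (by positivity)]
  gcongr
  norm_num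
end

section
/- Let a, P1, P1p be real numbers with a > 0, 0 ≤ P1p ≤ P1 and a^2 * P1p ≥ 1. Then C(P1p) + C( a^2 * (P1 − P1p) / 2 ) ≥ C( (P1 + P1p) / 2 ). -/
theorem stmt_8 (a P1 P1p : ℝ) (ha : 0 < a) (hP1p : 0 ≤ P1p) (hle : P1p ≤ P1)
    (h : 1 ≤ a ^ 2 * P1p) :
    C ((P1 + P1p) / 2) ≤ C P1p + C (a ^ 2 * (P1 - P1p) / 2) := by
  have hd : 0 ≤ P1 - P1p := sub_nonneg.mpr hle
  have hq : 0 ≤ a ^ 2 * (P1 - P1p) / 2 := by positivity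
  have key : 1 + (P1 + P1p) / 2 ≤ (1 + P1p) * (1 + a ^ 2 * (P1 - P1p) / 2) := by
    nlinarith [mul_le_mul_of_nonneg_right h hd]
  have hlog := Real.logb_le_logb_of_le one_lt_two (by linarith) key
  rw [Real.logb_mul (by positivity) (by positivity)] at hlog
  unfold C
  linarith
end

section
/- Let a, P1, P2 be real numbers with a > 0, P2 ≥ 0 and a^2 * P1 ≥ 1. Then C(2*a^2*P1 + 2*P2) ≤ C( (a^2*P1 − 1 + 2*P2) / 4 ) + 3/2. -/
theorem stmt_9 (a P1 P2 : ℝ) (ha : 0 < a) (hP2 : 0 ≤ P2) (hI : 1 ≤ a ^ 2 * P1) :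
    C (2 * a ^ 2 * P1 + 2 * P2) ≤ C ((a ^ 2 * P1 - 1 + 2 * P2) / 4) + 3 / 2 := by
  have h8 : Real.logb 2 8 = 3 := by
    rw [show (8 : ℝ) = 2 ^ (3 : ℕ) by norm_num, Real.logb_pow, Real.logb_self_eq_one one_lt_two]
    norm_num
  have hpos : 0 < 1 + (a ^ 2 * P1 - 1 + 2 * P2) / 4 := by linarith
  have hlog : Real.logb 2 (1 + (2 * a ^ 2 * P1 + 2 * P2)) ≤
      Real.logb 2 (8 * (1 + (a ^ 2 * P1 - 1 + 2 * P2) / 4)) :=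
    Real.logb_le_logb_of_le one_lt_two (by linarith) (by linarith)
  rw [Real.logb_mul (by norm_num) hpos.ne', h8] at hlog
  unfold C
  linarith
end

section
/- Let a, P1, P2, C21 be real numbers with P1 ≥ 1, P2 ≥ 0, C21 ≥ 0 and P2 + 1 ≤ a^2. Then min{ C((P1−1)/4) + C(P2) + C21 , C(a^2*P1 + P2) − 1/2 } ≤ C((P1−1)/2) + min{ C( a^2 / (P2+1) ), C21 } + C(P2). -/
/-- The received-power bound `(1 + a²P₁ + P₂) / 2 ≤ (1 + (P₁ - 1)/2) (1 + a²/(P₂ + 1)) (1 + P₂)`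
in logarithmic form. -/
theorem C_sub_half_le {a P1 P2 : ℝ} (hP1 : 1 ≤ P1) (hP2 : 0 ≤ P2) :
    C (a ^ 2 * P1 + P2) - 1 / 2 ≤ C ((P1 - 1) / 2) + C (a ^ 2 / (P2 + 1)) + C P2 := by
  have ha : 0 ≤ a ^ 2 := sq_nonneg a
  have h1 : 0 < 1 + (P1 - 1) / 2 := by linarith
  have h2 : 0 < 1 + a ^ 2 / (P2 + 1) := by positivity
  have h3 : 0 < 1 + P2 := by linarith
  have h4 : 0 < 1 + (a ^ 2 * P1 + P2) := by positivity
  have key : 1 + (a ^ 2 * P1 + P2) ≤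
      2 * ((1 + (P1 - 1) / 2) * (1 + a ^ 2 / (P2 + 1)) * (1 + P2)) := by
    have e : 2 * ((1 + (P1 - 1) / 2) * (1 + a ^ 2 / (P2 + 1)) * (1 + P2)) =
        (P1 + 1) * (1 + P2 + a ^ 2) := by
      field_simp
      ring
    rw [e]
    nlinarith [mul_nonneg (zero_le_one.trans hP1) h3.le]
  have hlog := Real.logb_le_logb_of_le (b := 2) (by norm_num) h4 key
  rw [Real.logb_mul two_ne_zero (by positivity), Real.logb_mul (by positivity) h3.ne',
    Real.logb_mul h1.ne' h2.ne', Real.logb_self_eq_one (by norm_num)] at hlog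
  unfold C
  linarith

theorem stmt_11 (a P1 P2 C21 : ℝ) (hP1 : 1 ≤ P1) (hP2 : 0 ≤ P2) (hC21 : 0 ≤ C21)
    (h : P2 + 1 ≤ a ^ 2) :
    min (C ((P1 - 1) / 4) + C P2 + C21) (C (a ^ 2 * P1 + P2) - 1 / 2) ≤
      C ((P1 - 1) / 2) + min (C (a ^ 2 / (P2 + 1))) C21 + C P2 := by
  rcases min_choice (C (a ^ 2 / (P2 + 1))) C21 with hmin | hmin <;> rw [hmin]
  · exact (min_le_right _ _).trans (C_sub_half_le hP1 hP2)
  · have := C_le_C (by linarith : 0 ≤ (P1 - 1) / 4) (by linarith : (P1 - 1) / 4 ≤ (P1 - 1) / 2)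
    exact (min_le_left _ _).trans (by linarith)
end

section
/- Let a, P1, P2 be real numbers with a > 0, P2 ≥ 0 and 1 ≤ a^2 * P1 ≤ P2 + 1. Then C( P1*P2 + P1*(1 + 2*a^2) + 2*P2 ) ≤ C( (a^2*P1 + 1) / (2*a^2) ) + C(P2 / 4) + 2. -/
theorem stmt_12 (a P1 P2 : ℝ) (ha : 0 < a) (hP2 : 0 ≤ P2)
    (h1 : 1 ≤ a ^ 2 * P1) (h2 : a ^ 2 * P1 ≤ P2 + 1) :
    C (P1 * P2 + P1 * (1 + 2 * a ^ 2) + 2 * P2) ≤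
      C ((a ^ 2 * P1 + 1) / (2 * a ^ 2)) + C (P2 / 4) + 2 := by
  have hP1 : 0 < P1 := pos_of_mul_pos_right (one_pos.trans_le h1) (sq_nonneg a)
  have hrate : (a ^ 2 * P1 + 1) / (2 * a ^ 2) = P1 / 2 + 1 / (2 * a ^ 2) := by
    field_simp
  have hinv : 0 < 1 / (2 * a ^ 2) := by positivity
  have hsixteen : Real.logb 2 16 = 4 := by
    rw [show (16 : ℝ) = 2 ^ (4 : ℝ) by norm_num]
    exact Real.logb_rpow (by norm_num) (by norm_num)
  have hprod : 1 + (P1 * P2 + P1 * (1 + 2 * a ^ 2) + 2 * P2) ≤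
      (1 + (P1 / 2 + 1 / (2 * a ^ 2))) * (1 + P2 / 4) * 16 := by
    nlinarith [mul_nonneg hP1.le hP2, mul_nonneg hinv.le hP2]
  have hlog := Real.logb_le_logb_of_le one_lt_two (by positivity) hprod
  rw [Real.logb_mul (by positivity) (by norm_num),
    Real.logb_mul (by positivity) (by positivity), hsixteen] at hlog
  rw [hrate]
  unfold C
  linarith
end

section
/- Let a, P1, P2 be real numbers with P2 ≥ 0 and 0 ≤ a^2 * P1 − 1 ≤ P2. Then C(2*a^2*P1 + 2*P2) ≤ C( P2 − (a^2*P1 − 1)/2 ) + 3/2. -/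
theorem stmt_13 (a P1 P2 : ℝ) (hP2 : 0 ≤ P2)
    (h0 : 0 ≤ a ^ 2 * P1 - 1) (h1 : a ^ 2 * P1 - 1 ≤ P2) :
    C (2 * a ^ 2 * P1 + 2 * P2) ≤ C (P2 - (a ^ 2 * P1 - 1) / 2) + 3 / 2 := by
  have h8 : Real.logb 2 8 = 3 := by
    rw [show (8 : ℝ) = 2 ^ (3 : ℝ) by norm_num, Real.logb_rpow (by norm_num) (by norm_num)]
  have hle : Real.logb 2 (1 + (2 * a ^ 2 * P1 + 2 * P2)) ≤
      Real.logb 2 (8 * (1 + (P2 - (a ^ 2 * P1 - 1) / 2))) :=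
    Real.logb_le_logb_of_le (by norm_num) (by linarith) (by linarith)
  rw [Real.logb_mul (by norm_num) (by linarith), h8] at hle
  unfold C
  linarith
end

section
/- Let a, P1, P2 be real numbers with 0 < a ≤ 1, P2 ≥ 0 and a^2 * P1 ≥ 1. Then C( P1*P2 + P1*(1 + 2*a^2) + 2*P2 ) ≤ C( (P2 + 2) / (2*a^2) ) + C( (a^2*P1 − 1) / 2 ) + 3/2. -/
theorem stmt_16 (a P1 P2 : ℝ) (ha0 : 0 < a) (ha1 : a ≤ 1) (hP2 : 0 ≤ P2)
    (hI : 1 ≤ a ^ 2 * P1) :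
    C (P1 * P2 + P1 * (1 + 2 * a ^ 2) + 2 * P2) ≤
      C ((P2 + 2) / (2 * a ^ 2)) + C ((a ^ 2 * P1 - 1) / 2) + 3 / 2 := by
  have hb0 : 0 < a ^ 2 := by positivity
  have hb1 : a ^ 2 ≤ 1 := pow_le_one₀ ha0.le ha1
  unfold C
  generalize a ^ 2 = b at *
  have hP1 : 0 < P1 := pos_of_mul_pos_right (by linarith) hb0.le
  have hx : 0 < 1 + (P2 + 2) / (2 * b) := by positivity
  have hy : 0 < 1 + (b * P1 - 1) / 2 := by linarith
  have h8 : Real.logb 2 8 = 3 := by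
    rw [show (8 : ℝ) = 2 ^ (3 : ℝ) by norm_num, Real.logb_rpow (by norm_num) (by norm_num)]
  have hinv : 1 ≤ 1 / b := (one_le_div hb0).2 hb1
  have hprod : (1 + (P2 + 2) / (2 * b)) * (1 + (b * P1 - 1) / 2) * 8 =
      2 * (2 * b + P2 + 2) * (P1 + 1 / b) := by
    field_simp
    ring
  have hle : 1 + (P1 * P2 + P1 * (1 + 2 * b) + 2 * P2) ≤
      (1 + (P2 + 2) / (2 * b)) * (1 + (b * P1 - 1) / 2) * 8 := by
    rw [hprod]
    have hmono : 2 * (2 * b + P2 + 2) * (P1 + 1) ≤ 2 * (2 * b + P2 + 2) * (P1 + 1 / b) := by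
      gcongr
    nlinarith [mul_nonneg hP1.le hP2, mul_pos hb0 hP1]
  have hlog := Real.logb_le_logb_of_le (b := 2) (by norm_num) (by positivity) hle
  rw [Real.logb_mul (by positivity) (by norm_num), Real.logb_mul hx.ne' hy.ne', h8] at hlog
  linarith
end

section
/- Let a, P1, P2 be real numbers with P2 ≥ 0 and P2 + 1 ≤ a^2 * P1. Then C(2*a^2*P1 + 2*P2) ≤ C( (2*a^2*P1 + P2) / 4 ) + C(13/3). -/
theorem stmt_17 (a P1 P2 : ℝ) (hP2 : 0 ≤ P2) (h : P2 + 1 ≤ a ^ 2 * P1) :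
    C (2 * a ^ 2 * P1 + 2 * P2) ≤ C ((2 * a ^ 2 * P1 + P2) / 4) + C (13 / 3) := by
  have hlog : Real.logb 2 (1 + (2 * a ^ 2 * P1 + 2 * P2)) ≤
      Real.logb 2 ((1 + (2 * a ^ 2 * P1 + P2) / 4) * (1 + 13 / 3)) :=
    Real.logb_le_logb_of_le one_lt_two (by linarith) (by linarith)
  rw [Real.logb_mul (by linarith) (by norm_num)] at hlog
  unfold C
  linarith
end

section
/- Let a, P1, P2 be real numbers with P1 ≥ 0, P2 ≥ 0, 1 ≤ a^2, a^2 ≤ P2 + 1 and P2 + 1 ≤ a^2 * P1. Then C( P1*P2 + P1*(1 + 2*a^2) + 2*P2 ) − [ C(a^2*P1) + C( P2 / (2*a^2) ) − 1/2 ] ≤ C(9). -/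
theorem stmt_18 (a P1 P2 : ℝ) (hP1 : 0 ≤ P1) (hP2 : 0 ≤ P2)
    (ha1 : 1 ≤ a ^ 2) (ha2 : a ^ 2 ≤ P2 + 1) (h : P2 + 1 ≤ a ^ 2 * P1) :
    C (P1 * P2 + P1 * (1 + 2 * a ^ 2) + 2 * P2) -
      (C (a ^ 2 * P1) + C (P2 / (2 * a ^ 2)) - 1 / 2) ≤ C 9 := by
  have hb : 0 < a ^ 2 := by linarith
  have hmul : P1 ≤ a ^ 2 * P1 := le_mul_of_one_le_left hP1 ha1
  have hquot : 0 ≤ P2 / (2 * a ^ 2) := by positivity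
  have hprod : a ^ 2 * P1 * (P2 / (2 * a ^ 2)) = P1 * P2 / 2 := by
    have ha : a ≠ 0 := (pow_ne_zero_iff two_ne_zero).mp hb.ne'
    field_simp
  have hPP : 0 ≤ P1 * P2 := mul_nonneg hP1 hP2
  have hU : 0 < 1 + (P1 * P2 + P1 * (1 + 2 * a ^ 2) + 2 * P2) := by positivity
  have hA : 0 < 1 + a ^ 2 * P1 := by positivity
  have hB : 0 < 1 + P2 / (2 * a ^ 2) := by positivity
  have key : 2 * (1 + (P1 * P2 + P1 * (1 + 2 * a ^ 2) + 2 * P2)) ≤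
      (1 + 9) * ((1 + a ^ 2 * P1) * (1 + P2 / (2 * a ^ 2))) := by
    linarith
  have hlog := Real.logb_le_logb_of_le (b := 2) (by norm_num) (by positivity) key
  rw [Real.logb_mul two_ne_zero hU.ne', Real.logb_mul (by norm_num) (mul_pos hA hB).ne',
    Real.logb_mul hA.ne' hB.ne', Real.logb_self_eq_one (by norm_num)] at hlog
  unfold C
  linarith
end

section
/- Let a, P1, P2 be real numbers with P1 ≥ 0, P2 ≥ 0 and a^2 ≤ P2 + 1. Then C( P1*P2 + P1*(1 + 2*a^2) + 2*P2 ) − [ C(P1) + C(P2 / 2) − 1/2 ] ≤ C(11). -/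
theorem stmt_19 (a P1 P2 : ℝ) (hP1 : 0 ≤ P1) (hP2 : 0 ≤ P2)
    (ha : a ^ 2 ≤ P2 + 1) :
    C (P1 * P2 + P1 * (1 + 2 * a ^ 2) + 2 * P2) -
      (C P1 + C (P2 / 2) - 1 / 2) ≤ C 11 := by
  have hle : 2 * (1 + (P1 * P2 + P1 * (1 + 2 * a ^ 2) + 2 * P2)) ≤
      (1 + 11) * ((1 + P1) * (1 + P2 / 2)) := by
    nlinarith [mul_le_mul_of_nonneg_left ha hP1, mul_nonneg hP1 hP2]
  have hlog := Real.logb_le_logb_of_le one_lt_two (by positivity) hle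
  rw [Real.logb_mul (by norm_num) (by positivity),
    Real.logb_mul (by norm_num) (by positivity),
    Real.logb_mul (by positivity) (by positivity),
    Real.logb_self_eq_one one_lt_two] at hlog
  unfold C
  linarith
end
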